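/- Let K be a field, n ≥ 1, let A be a nonempty subset of {1,…,n}, and let R be the quotient of the formal power series ring K[[x, u_1, …, u_n, α]] by the principal ideal generated by α·x − ∏_{i∈A} u_i. Then for every j ∈ {1,…,n}, the ideal of R generated by the residue classes of x and u_j has height 1 if and only if j ∈ A. -/

import Mathlib

/-- The height (codimension) of an ideal `I` of a commutative ring: the infimum of the
heights of the prime ideals containing `I`. -/
noncomputable def idealHeight {R : Type*} [CommRing R] (I : Ideal R) : ℕ∞ :=
  ⨅ (P : PrimeSpectrum R) (_ : I ≤ P.asIdeal), Order.height P

/-!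
For a regular element `f` of a Noetherian ring `S`, every prime of `S` containing `f` loses exactly
one unit of height in `S ⧸ (f)`, so the height of the image of an ideal `P` is `ht (P + (f)) - 1`.
If `P` is prime this equals `ht P - 1` exactly when `f ∈ P`. Take `P = (x, u_j)`, which is prime of
height `2`: modulo `P` the element `f = α x - ∏_{i ∈ A} u_i` is `-∏_{i ∈ A} u_i`, and, `P` being
prime, this vanishes if and only if some factor lies in `P`, that is, `j ∈ A`.
-/

section Height

open Ideal

variable {S : Type*} [CommRing S]

lemma idealHeight_eq_height (I : Ideal S) : idealHeight I = I.height := by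
  refine le_antisymm ?_ (le_iInf₂ fun P hP ↦ ?_)
  · rw [height_eq_inf_minimalPrimes]
    refine le_iInf₂ fun p hp ↦ ?_
    exact (iInf₂_le ⟨p, hp.isPrime⟩ hp.le).trans_eq
      (PrimeSpectrum.height_eq_orderHeight ⟨p, hp.isPrime⟩).symm
  · exact (height_mono hP).trans_eq (PrimeSpectrum.height_eq_orderHeight P)

lemma height_add_one_le_height_apply_of_strictMono {α β : Type*} [Preorder α] [Preorder β]
    {φ : α → β} (hφ : StrictMono φ) (hmin : ∀ a, ¬ IsMin (φ a)) (a : α) :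
    Order.height a + 1 ≤ Order.height (φ a) := by
  have : Nonempty {l : LTSeries α // l.last = a} := ⟨RelSeries.singleton _ a, rfl⟩
  rw [Order.height_eq_iSup_last_eq, iSup_subtype', ENat.iSup_add]
  refine iSup_le fun ⟨l, hl⟩ ↦ ?_
  obtain ⟨b, hb⟩ := not_isMin_iff.mp (hmin l.head)
  rw [← LTSeries.head_map l φ hφ] at hb
  have hlen : ((l.map φ hφ).cons b hb).length = l.length + 1 := by simp
  have hlast : ((l.map φ hφ).cons b hb).last = φ a := by simp [hl]
  exact_mod_cast hlen ▸ Order.length_le_height hlast.le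

lemma height_add_one_le_height_comap_quotientMk {f : S} (hf : f ∈ nonZeroDivisors S)
    (Q : Ideal (S ⧸ span {f})) [hQ : Q.IsPrime] :
    Q.height + 1 ≤ (Q.comap (Ideal.Quotient.mk (span {f}))).height := by
  let π := Ideal.Quotient.mk (span {f})
  have not_isMin (P : PrimeSpectrum (S ⧸ span {f})) : ¬ IsMin (PrimeSpectrum.comap π P) := by
    rw [PrimeSpectrum.isMin_iff]
    refine fun hmin ↦ notMem_nonZeroDivisors_of_mem_mem_minimalPrimes ?_ hmin hf
    simp [π]
  have height_le := height_add_one_le_height_apply_of_strictMono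
    (RingHom.strictMono_comap_of_surjective Ideal.Quotient.mk_surjective) not_isMin ⟨Q, hQ⟩
  rwa [← PrimeSpectrum.height_eq_orderHeight, ← PrimeSpectrum.height_eq_orderHeight] at height_le

variable [IsNoetherianRing S]

lemma height_comap_quotientMk {f : S} (hf : f ∈ nonZeroDivisors S) (J : Ideal (S ⧸ span {f})) :
    (J.comap (Ideal.Quotient.mk (span {f}))).height = J.height + 1 := by
  let π := Ideal.Quotient.mk (span {f})
  have hπ : Function.Surjective π := Ideal.Quotient.mk_surjective
  have mem_comap (Q : Ideal (S ⧸ span {f})) : f ∈ Q.comap π := by simp [π]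
  apply le_antisymm
  · rw [J.height_eq_inf_minimalPrimes, ENat.iInf₂_add]
    refine le_iInf₂ fun Q hQ ↦ ?_
    have := hQ.isPrime
    calc (J.comap π).height
        ≤ (Q.comap π).height := height_mono (comap_mono hQ.le)
      _ ≤ ((Q.comap π).map π).height + 1 := height_le_height_add_one_of_mem (mem_comap Q)
      _ = Q.height + 1 := by rw [map_comap_of_surjective π hπ]
  · rw [(J.comap _).height_eq_inf_minimalPrimes]
    refine le_iInf₂ fun p hp ↦ ?_
    have := hp.isPrime
    have hfp : span {f} ≤ p := (span_singleton_le_iff_mem p).mpr (hp.le (mem_comap J))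
    have := isPrime_map_quotientMk_of_isPrime hfp
    have hJp : J ≤ p.map π := le_map_of_comap_le_of_surjective π hπ hp.le
    calc J.height + 1
        ≤ (p.map π).height + 1 := by grw [hJp]
      _ ≤ ((p.map π).comap π).height := height_add_one_le_height_comap_quotientMk hf _
      _ = p.height := by rw [comap_map_mk hfp]

lemma height_map_quotientMk_add_one_eq_iff_mem {f : S} (hf : f ∈ nonZeroDivisors S)
    (P : Ideal S) [P.IsPrime] :
    (P.map (Ideal.Quotient.mk (span {f}))).height + 1 = P.height ↔ f ∈ P := by
  rw [← height_comap_quotientMk hf, comap_map_quotientMk, ← span_singleton_le_iff_mem]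
  refine ⟨fun h ↦ ?_, fun h ↦ by rw [sup_eq_right.mpr h]⟩
  by_contra hfP
  exact (height_strict_mono_of_isPrime (right_lt_sup.mpr hfP)).ne' h

end Height

section MvPowerSeries

open MvPowerSeries

variable {σ K : Type*}

lemma mem_span_X_image_of_coeff_eq_zero [CommSemiring K] (s : Finset σ) {f : MvPowerSeries σ K}
    (hf : ∀ m : σ →₀ ℕ, (∀ i ∈ s, m i = 0) → coeff m f = 0) :
    f ∈ Ideal.span (X '' (s : Set σ)) := by
  classical
  induction s using Finset.induction_on generalizing f with
  | empty =>
    have hf0 : f = 0 := ext fun m ↦ hf m (by simp)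
    simp [hf0]
  | insert a s _ ih =>
    let g : MvPowerSeries σ K := fun m ↦ if m a = 0 then 0 else coeff m f
    let h : MvPowerSeries σ K := fun m ↦ if m a = 0 then coeff m f else 0
    have coeff_g (m : σ →₀ ℕ) : coeff m g = if m a = 0 then 0 else coeff m f := rfl
    have coeff_h (m : σ →₀ ℕ) : coeff m h = if m a = 0 then coeff m f else 0 := rfl
    have hgh : f = g + h := by
      ext m
      rw [map_add, coeff_g, coeff_h]
      split_ifs <;> simp
    have hg : X a ∣ g := X_dvd_iff.mpr fun m hm ↦ by rw [coeff_g, if_pos hm]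
    have hh : h ∈ Ideal.span (X '' (s : Set σ)) := by
      refine ih fun m hm ↦ ?_
      rw [coeff_h]
      split_ifs with hma
      · exact hf m (by simpa [hma] using hm)
      · rfl
    rw [hgh, Finset.coe_insert]
    refine add_mem (Ideal.mem_of_dvd _ hg (Ideal.subset_span ?_)) (Ideal.span_mono ?_ hh)
    · exact Set.mem_image_of_mem X (Set.mem_insert a _)
    · exact Set.image_mono (Set.subset_insert a _)

lemma ker_killCompl_subtype_eq_span_X_image [CommSemiring K] (s : Finset σ) :
    RingHom.ker (killCompl (R := K) (Function.Embedding.subtype (· ∉ s))) =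
      Ideal.span (X '' (s : Set σ)) := by
  refine le_antisymm (fun f hf ↦ mem_span_X_image_of_coeff_eq_zero s fun m hm ↦ ?_)
    (Ideal.span_le.mpr ?_)
  · have hm_range :
        m ∈ Set.range (Finsupp.embDomain (Function.Embedding.subtype (· ∉ s))) := by
      rw [Finsupp.mem_range_embDomain_iff]
      intro i hi
      exact ⟨⟨i, fun his ↦ Finsupp.mem_support_iff.mp hi (hm i his)⟩, rfl⟩
    obtain ⟨k, rfl⟩ := hm_range
    rw [← coeff_killCompl, RingHom.mem_ker.mp hf, coeff_zero]
  · rintro _ ⟨i, hi, rfl⟩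
    exact killCompl_X_eq_zero (by simpa using hi)

variable [CommRing K]

lemma X_mem_span_X_image_iff [Nontrivial K] {s : Finset σ} {i : σ} :
    (X i : MvPowerSeries σ K) ∈ Ideal.span (X '' (s : Set σ)) ↔ i ∈ s := by
  refine ⟨fun h ↦ ?_, fun h ↦ Ideal.subset_span ⟨i, h, rfl⟩⟩
  by_contra hi
  rw [← ker_killCompl_subtype_eq_span_X_image, RingHom.mem_ker] at h
  have X_ne_zero : (X (⟨i, hi⟩ : {k // k ∉ s}) : MvPowerSeries {k // k ∉ s} K) ≠ 0 :=
    nonZeroDivisors.ne_zero X_mem_nonzeroDivisors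
  have killCompl_X_i :=
    killCompl_X (R := K) (e := Function.Embedding.subtype (· ∉ s)) ⟨i, hi⟩
  exact X_ne_zero (killCompl_X_i.symm.trans h)

variable [IsDomain K]

instance isDomain_mvPowerSeries : IsDomain (MvPowerSeries σ K) := NoZeroDivisors.to_isDomain _

instance isPrime_span_X_image (s : Finset σ) :
    (Ideal.span (X '' (s : Set σ) : Set (MvPowerSeries σ K))).IsPrime := by
  rw [← ker_killCompl_subtype_eq_span_X_image]
  exact RingHom.ker_isPrime _

lemma height_span_X_image [IsNoetherianRing K] [Finite σ] (s : Finset σ) :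
    (Ideal.span (X '' (s : Set σ) : Set (MvPowerSeries σ K))).height = s.card := by
  classical
  apply le_antisymm
  · calc (Ideal.span (X '' (s : Set σ) : Set (MvPowerSeries σ K))).height
        ≤ (Ideal.span (X '' (s : Set σ) : Set (MvPowerSeries σ K))).spanFinrank :=
          Ideal.height_le_spanFinrank _ Ideal.IsPrime.ne_top'
      _ ≤ (X '' (s : Set σ) : Set (MvPowerSeries σ K)).encard :=
          Submodule.spanFinrank_span_le_encard _
      _ ≤ s.card := (Set.encard_image_le _ _).trans_eq (Set.encard_coe_eq_coe_finsetCard s)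
  · induction s using Finset.induction_on with
    | empty => simp
    | insert a s ha ih =>
      have hlt : Ideal.span (X '' (s : Set σ) : Set (MvPowerSeries σ K)) <
          Ideal.span (X '' (↑(insert a s) : Set σ)) :=
        SetLike.lt_iff_le_and_exists.mpr
          ⟨Ideal.span_mono (Set.image_mono (by simp)), X a,
            X_mem_span_X_image_iff.mpr (Finset.mem_insert_self a s),
            mt X_mem_span_X_image_iff.mp ha⟩
      rw [Finset.card_insert_of_notMem ha, Nat.cast_add_one]
      grw [ih]
      exact Ideal.height_add_one_le_of_lt_of_isPrime hlt

lemma mul_X_sub_prod_X_mem_span_X_image_iff {ι : Type*} (g : MvPowerSeries σ K) (u : ι → σ)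
    (A : Finset ι) {s : Finset σ} {x : σ} (hx : x ∈ s) :
    g * X x - ∏ i ∈ A, X (u i) ∈ Ideal.span (X '' (s : Set σ)) ↔ ∃ i ∈ A, u i ∈ s := by
  rw [Submodule.sub_mem_iff_right, Ideal.IsPrime.prod_mem_iff]
  · simp only [X_mem_span_X_image_iff]
  · exact Ideal.mul_mem_left _ _ (X_mem_span_X_image_iff.mpr hx)

lemma mul_X_sub_prod_X_ne_zero {ι : Type*} (g : MvPowerSeries σ K) {u : ι → σ} {A : Finset ι}
    {x : σ} (hx : ∀ i ∈ A, u i ≠ x) : g * X x - ∏ i ∈ A, X (u i) ≠ 0 := by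
  intro h
  obtain ⟨i, hi, hix⟩ := (mul_X_sub_prod_X_mem_span_X_image_iff g u A
    (Finset.mem_singleton_self x)).mp (h ▸ zero_mem _)
  exact hx i hi (Finset.mem_singleton.mp hix)

theorem height_ideal_blowup_chart_general [IsNoetherianRing K] [Finite σ] {ι : Type*}
    (u : ι ↪ σ) {x : σ} (hx : ∀ i, u i ≠ x) (g : MvPowerSeries σ K) (A : Finset ι) (j : ι) :
    idealHeight (Ideal.span
      {Ideal.Quotient.mk (Ideal.span {g * X x - ∏ i ∈ A, X (u i)}) (X x),
       Ideal.Quotient.mk (Ideal.span {g * X x - ∏ i ∈ A, X (u i)}) (X (u j))}) = 1 ↔ j ∈ A := by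
  classical
  set f := g * X x - ∏ i ∈ A, X (u i)
  let P : Ideal (MvPowerSeries σ K) := Ideal.span (X '' (({x, u j} : Finset σ) : Set σ))
  have hf : f ∈ nonZeroDivisors (MvPowerSeries σ K) :=
    mem_nonZeroDivisors_of_ne_zero (mul_X_sub_prod_X_ne_zero g fun i _ ↦ hx i)
  have hP : P.height = 1 + 1 := by
    rw [height_span_X_image, Finset.card_pair (hx j).symm]
    norm_num
  have hmap : Ideal.span {Ideal.Quotient.mk (Ideal.span {f}) (X x),
      Ideal.Quotient.mk (Ideal.span {f}) (X (u j))} =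
        P.map (Ideal.Quotient.mk (Ideal.span {f})) := by
    simp only [P, Finset.coe_pair, Ideal.map_span, Set.image_pair]
  rw [hmap, idealHeight_eq_height]
  calc (P.map (Ideal.Quotient.mk (Ideal.span {f}))).height = 1
      ↔ (P.map (Ideal.Quotient.mk (Ideal.span {f}))).height + 1 = P.height := by
        rw [hP, (ENat.add_left_injective_of_ne_top ENat.one_ne_top).eq_iff]
    _ ↔ f ∈ P := height_map_quotientMk_add_one_eq_iff_mem hf P
    _ ↔ ∃ i ∈ A, u i ∈ ({x, u j} : Finset σ) :=
        mul_X_sub_prod_X_mem_span_X_image_iff g u A (Finset.mem_insert_self _ _)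
    _ ↔ j ∈ A := by simp [hx]

end MvPowerSeries

open MvPowerSeries in
/-- Let `R` be the quotient of `K[[x, u_1, …, u_n, α]]` (with `x` indexed by `Sum.inr false`,
`α` by `Sum.inr true` and `u_i` by `Sum.inl i`) by the ideal `(α·x − ∏_{i∈A} u_i)`, for a
nonempty `A ⊆ {1,…,n}`. For every `j`, the ideal of `R` generated by the residue classes
of `x` and `u_j` has height 1 if and only if `j ∈ A`. -/
theorem height_ideal_blowup_chart {K : Type*} [Field K] (n : ℕ) (hn : 1 ≤ n)
    (A : Finset (Fin n)) (hA : A.Nonempty) (j : Fin n) :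
    idealHeight (Ideal.span
      {Ideal.Quotient.mk (Ideal.span
          {(X (Sum.inr true) : MvPowerSeries (Fin n ⊕ Bool) K) * X (Sum.inr false) -
            ∏ i ∈ A, X (Sum.inl i)})
          (X (Sum.inr false)),
       Ideal.Quotient.mk (Ideal.span
          {(X (Sum.inr true) : MvPowerSeries (Fin n ⊕ Bool) K) * X (Sum.inr false) -
            ∏ i ∈ A, X (Sum.inl i)})
          (X (Sum.inl j))}) = 1 ↔ j ∈ A :=
  height_ideal_blowup_chart_general .inl (fun _ ↦ Sum.inl_ne_inr) (X (Sum.inr true)) A j
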